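/- Let K₀, K₁, ..., Kₙ be symmetric plane convex bodies of positive area, and denote by a(K,L) the mixed area (the polarization of the area under Minkowski sum). Then for any c₁, ..., cₙ ∈ ℝ, a(K₀)·Σ_{i,j=1}^n c_i c_j a(K_i, K_j) ≤ (Σ_{k=1}^n c_k a(K_k, K₀))². -/

import Mathlib

open Pointwise MeasureTheory

/-- The mixed area of two plane convex bodies, defined by polarization of the area under
Minkowski sum: `a(K+L) = a(K) + 2a(K,L) + a(L)`. -/
noncomputable def mixedArea (K L : Set (ℝ × ℝ)) : ℝ :=
  ((volume (K + L)).toReal - (volume K).toReal - (volume L).toReal) / 2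

/-!
As `s` runs from `0` to `±∞`, the upper supporting line of slope `-s` of a plane convex body `K`
turns about its point of contact and sweeps the region between `K` and the upper corners of its
bounding box. With `γ_K s` the signed horizontal length of the segment from the side of the box to
the point of contact, the swept area is `½ ∫ γ_K²` (Mamikon's theorem). The lower corners are the
upper corners of `-K`, so

`a(K) = w_K h_K - ½ ‖γ_K‖² - ½ ‖γ_{-K}‖²`,

where `w_K` and `h_K` are the sides of the box. The quantities `w_K`, `h_K`, `γ_K`, `γ_{-K}` are all
additive under Minkowski sum, hence mixed area is the polarization of this quadratic form. The form
is nonpositive on the hyperplane `w = 0`, which gives a reversed Cauchy-Schwarz inequality for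
arbitrary vectors, in particular for arbitrary real combinations of convex bodies.
-/

open Set

section SupportFunction

variable {V : Type*} [AddCommGroup V] [Module ℝ V] [TopologicalSpace V]

/-- The support function `f ↦ max_K f` of a convex body, on the dual space. -/
noncomputable def supportFun (K : ConvexBody V) (f : StrongDual ℝ V) : ℝ :=
  sSup (f '' K)

lemma isGreatest_supportFun (K : ConvexBody V) (f : StrongDual ℝ V) :
    IsGreatest (f '' K) (supportFun K f) :=
  (K.isCompact.image f.continuous).isGreatest_sSup (K.nonempty.image f)

lemma le_supportFun (K : ConvexBody V) (f : StrongDual ℝ V) {z : V} (hz : z ∈ K) :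
    f z ≤ supportFun K f :=
  (isGreatest_supportFun K f).2 (mem_image_of_mem f hz)

lemma exists_eq_supportFun (K : ConvexBody V) (f : StrongDual ℝ V) :
    ∃ z ∈ K, f z = supportFun K f :=
  (isGreatest_supportFun K f).1

lemma supportFun_le_iff {K : ConvexBody V} {f : StrongDual ℝ V} {r : ℝ} :
    supportFun K f ≤ r ↔ ∀ z ∈ K, f z ≤ r :=
  (isLUB_le_iff (isGreatest_supportFun K f).isLUB).trans forall_mem_image

lemma supportFun_add_le (K : ConvexBody V) (f g : StrongDual ℝ V) :
    supportFun K (f + g) ≤ supportFun K f + supportFun K g :=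
  supportFun_le_iff.2 fun _ hz ↦ add_le_add (le_supportFun K f hz) (le_supportFun K g hz)

lemma supportFun_smul (K : ConvexBody V) {r : ℝ} (hr : 0 ≤ r) (f : StrongDual ℝ V) :
    supportFun K (r • f) = r * supportFun K f := by
  have himage : (r • f) '' K = r • (f '' K) := by rw [← image_smul, image_image]; rfl
  rw [supportFun, himage, Real.sSup_smul_of_nonneg hr, smul_eq_mul, supportFun]

lemma image_eq_Icc_supportFun (K : ConvexBody V) (f : StrongDual ℝ V) :
    f '' K = Icc (-supportFun K (-f)) (supportFun K f) := by
  refine Subset.antisymm ?_ ?_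
  · rintro _ ⟨z, hz, rfl⟩
    exact ⟨neg_le.1 (le_supportFun K (-f) hz), le_supportFun K f hz⟩
  · obtain ⟨z, hz, hzf⟩ := exists_eq_supportFun K (-f)
    have hmin : -supportFun K (-f) ∈ f '' K := ⟨z, hz, by rw [← hzf]; simp⟩
    exact (K.convex.linear_image f.toLinearMap).ordConnected.out hmin (isGreatest_supportFun K f).1

lemma supportFun_add [ContinuousAdd V] (K L : ConvexBody V) (f : StrongDual ℝ V) :
    supportFun (K + L) f = supportFun K f + supportFun L f := by
  have hK := isGreatest_supportFun K f
  have hL := isGreatest_supportFun L f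
  rw [supportFun, ConvexBody.coe_add, image_add,
    csSup_add hK.nonempty hK.bddAbove hL.nonempty hL.bddAbove, supportFun, supportFun]

lemma supportFun_smul_body [ContinuousSMul ℝ V] (r : ℝ) (K : ConvexBody V)
    (f : StrongDual ℝ V) : supportFun (r • K) f = supportFun K (r • f) := by
  rw [supportFun, supportFun, ConvexBody.coe_smul, ← image_smul, image_image]
  simp

lemma mem_iff_forall_le_supportFun [IsTopologicalAddGroup V] [ContinuousSMul ℝ V]
    [LocallyConvexSpace ℝ V] [T2Space V] {K : ConvexBody V} {z : V} :
    z ∈ K ↔ ∀ f : StrongDual ℝ V, f z ≤ supportFun K f := by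
  refine ⟨fun hz f ↦ le_supportFun K f hz, fun h ↦ ?_⟩
  rw [← SetLike.mem_coe, ← iInter_halfSpaces_eq K.convex K.isClosed]
  refine mem_iInter.2 fun f ↦ ?_
  obtain ⟨y, hy, hyf⟩ := exists_eq_supportFun K f
  exact ⟨y, hy, hyf ▸ h f⟩

end SupportFunction

lemma lintegral_Ico_ofReal {D : ℝ → ℝ} {a b : ℝ} (hab : a ≤ b)
    (hD : IntervalIntegrable D volume a b) (hpos : ∀ s ∈ Ico a b, 0 ≤ D s) :
    ∫⁻ s in Ico a b, ENNReal.ofReal (D s) = ENNReal.ofReal (∫ s in a..b, D s) := by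
  rw [intervalIntegral.integral_of_le hab, ← integral_Ico_eq_integral_Ioc]
  refine (ofReal_integral_eq_lintegral_ofReal ?_ ?_).symm
  · exact (intervalIntegrable_iff_integrableOn_Ico_of_le hab).1 hD
  · exact (ae_restrict_iff' measurableSet_Ico).2 (.of_forall hpos)

lemma lintegral_Ioo_ofReal_sub_const {a b ξ : ℝ} (hξ : ξ ∈ Icc a b) :
    ∫⁻ x in Ioo a b, ENNReal.ofReal (x - ξ) = ENNReal.ofReal ((b - ξ) ^ 2 / 2) := by
  have hintegral : ∫ x in ξ..b, (x - ξ) = (b - ξ) ^ 2 / 2 := by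
    simp only [intervalIntegral.intervalIntegrable_id, intervalIntegrable_const,
      intervalIntegral.integral_sub, integral_id, intervalIntegral.integral_const, smul_eq_mul]
    ring
  rw [setLIntegral_congr Ioo_ae_eq_Ico, ← hintegral, ← lintegral_Ico_ofReal hξ.2
    (Continuous.intervalIntegrable (by fun_prop) _ _) fun x hx ↦ sub_nonneg.2 hx.1,
    ← lintegral_indicator measurableSet_Ico, ← lintegral_indicator measurableSet_Ico]
  refine lintegral_congr fun x ↦ ?_
  grind [ENNReal.ofReal_of_nonpos, indicator_of_mem, indicator_of_notMem]

lemma lintegral_Ioo_ofReal_const_sub {a b ξ : ℝ} (hξ : ξ ∈ Icc a b) :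
    ∫⁻ x in Ioo a b, ENNReal.ofReal (ξ - x) = ENNReal.ofReal ((ξ - a) ^ 2 / 2) := by
  have hintegral : ∫ x in a..ξ, (ξ - x) = (ξ - a) ^ 2 / 2 := by
    simp [intervalIntegral.integral_comp_sub_left fun x ↦ x]
  rw [setLIntegral_congr Ioo_ae_eq_Ico, ← hintegral, ← lintegral_Ico_ofReal hξ.1
    (Continuous.intervalIntegrable (by fun_prop) _ _) fun x hx ↦ sub_nonneg.2 hx.2.le,
    ← lintegral_indicator measurableSet_Ico, ← lintegral_indicator measurableSet_Ico]
  refine lintegral_congr fun x ↦ ?_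
  grind [ENNReal.ofReal_of_nonpos, indicator_of_mem, indicator_of_notMem]

section ConvexFunction

variable {G : ℝ → ℝ}

lemma monotone_rightDeriv (hG : ConvexOn ℝ univ G) :
    Monotone fun s ↦ derivWithin G (Ioi s) s := by
  simpa [monotoneOn_univ] using hG.monotoneOn_rightDeriv

lemma hasDerivWithinAt_rightDeriv (hG : ConvexOn ℝ univ G) (s : ℝ) :
    HasDerivWithinAt G (derivWithin G (Ioi s) s) (Ioi s) s :=
  hG.hasDerivWithinAt_rightDeriv_of_mem_interior (by simp)

lemma integral_rightDeriv (hG : ConvexOn ℝ univ G) (a b : ℝ) :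
    ∫ s in a..b, derivWithin G (Ioi s) s = G b - G a :=
  intervalIntegral.integral_eq_sub_of_hasDeriv_right
    hG.locallyLipschitz.continuous.continuousOn
    (fun s _ ↦ hasDerivWithinAt_rightDeriv hG s)
    (monotone_rightDeriv hG).intervalIntegrable

lemma rightDeriv_le_of_slope_le (hG : ConvexOn ℝ univ G) {s t r : ℝ} (hst : s < t)
    (hr : G t - G s ≤ (t - s) * r) : derivWithin G (Ioi s) s ≤ r := by
  refine (hG.rightDeriv_le_slope_of_mem_interior (by simp) (mem_univ t) hst).trans ?_
  rwa [slope_def_field, div_le_iff₀' (sub_pos.2 hst)]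

lemma le_rightDeriv_of_le_slope (hG : ConvexOn ℝ univ G) {s r : ℝ}
    (hr : ∀ t, s < t → (t - s) * r ≤ G t - G s) : r ≤ derivWithin G (Ioi s) s := by
  have htendsto := (hasDerivWithinAt_iff_tendsto_slope' self_notMem_Ioi).1
    (hasDerivWithinAt_rightDeriv hG s)
  refine ge_of_tendsto htendsto (eventually_mem_nhdsWithin.mono fun t (ht : s < t) ↦ ?_)
  rw [slope_def_field, le_div_iff₀' (sub_pos.2 ht)]
  exact hr t ht

lemma rightDeriv_nonpos_of_lt_argmin (hG : ConvexOn ℝ univ G) {s t : ℝ}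
    (ht : ∀ u, G t ≤ G u) (hst : s < t) : derivWithin G (Ioi s) s ≤ 0 :=
  rightDeriv_le_of_slope_le hG hst (by simpa using ht s)

lemma rightDeriv_nonneg_of_argmin_le (hG : ConvexOn ℝ univ G) {s t : ℝ}
    (ht : ∀ u, G t ≤ G u) (hts : t ≤ s) : 0 ≤ derivWithin G (Ioi s) s :=
  (le_rightDeriv_of_le_slope hG (by simpa using fun u _ ↦ ht u)).trans
    (monotone_rightDeriv hG hts)

lemma lintegral_rightDeriv_toward_argmin (hG : ConvexOn ℝ univ G) {t : ℝ}
    (ht : ∀ u, G t ≤ G u) (c : ℝ) :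
    ∫⁻ s, ENNReal.ofReal (if s < c then derivWithin G (Ioi s) s else -derivWithin G (Ioi s) s)
      = ENNReal.ofReal (G c - G t) := by
  have hD (a b : ℝ) := (monotone_rightDeriv hG).intervalIntegrable (a := a) (b := b) (μ := volume)
  have hneg {s : ℝ} (hs : s < t) := rightDeriv_nonpos_of_lt_argmin hG ht hs
  have hpos {s : ℝ} (hs : t ≤ s) := rightDeriv_nonneg_of_argmin_le hG ht hs
  rcases le_total c t with hct | htc
  · rw [← neg_sub, ← integral_rightDeriv hG, ← intervalIntegral.integral_neg,
      ← lintegral_Ico_ofReal (D := fun s ↦ -derivWithin G (Ioi s) s) hct (hD c t).neg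
        fun s hs ↦ neg_nonneg.2 (hneg hs.2),
      ← lintegral_indicator measurableSet_Ico]
    refine lintegral_congr fun s ↦ ?_
    grind [ENNReal.ofReal_of_nonpos, indicator_of_mem, indicator_of_notMem]
  · rw [← integral_rightDeriv hG, ← lintegral_Ico_ofReal htc (hD t c) fun s hs ↦ hpos hs.1,
      ← lintegral_indicator measurableSet_Ico]
    refine lintegral_congr fun s ↦ ?_
    grind [ENNReal.ofReal_of_nonpos, indicator_of_mem, indicator_of_notMem]

end ConvexFunction

section SlopeSupport

local notation "e₁" => ContinuousLinearMap.fst ℝ ℝ ℝ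
local notation "e₂" => ContinuousLinearMap.snd ℝ ℝ ℝ

/-- The support function of `K` along the line `s ↦ (s, 1)` of the dual plane: the intercept of the
upper supporting line of slope `-s`. -/
noncomputable def slopeSupport (K : ConvexBody (ℝ × ℝ)) (s : ℝ) : ℝ :=
  supportFun K (s • e₁ + e₂)

/-- The least abscissa of a point of `K`. -/
noncomputable def leftEnd (K : ConvexBody (ℝ × ℝ)) : ℝ :=
  -supportFun K (-e₁)

/-- The greatest abscissa of a point of `K`. -/
noncomputable def rightEnd (K : ConvexBody (ℝ × ℝ)) : ℝ :=
  supportFun K e₁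

/-- The greatest abscissa of a point of `K` on its upper supporting line of slope `-s`, encoded as
the right derivative of `slopeSupport K`. -/
noncomputable def tangentAbscissa (K : ConvexBody (ℝ × ℝ)) (s : ℝ) : ℝ :=
  derivWithin (slopeSupport K) (Ioi s) s

variable (K L : ConvexBody (ℝ × ℝ))

lemma le_slopeSupport {z : ℝ × ℝ} (hz : z ∈ K) (s : ℝ) : s * z.1 + z.2 ≤ slopeSupport K s := by
  simpa [slopeSupport] using le_supportFun K (s • e₁ + e₂) hz

lemma convexOn_slopeSupport : ConvexOn ℝ univ (slopeSupport K) := by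
  refine ⟨convex_univ, fun s _ t _ p q hp hq hpq ↦ ?_⟩
  have hcomb : (p • s + q • t) • e₁ + e₂ = p • (s • e₁ + e₂) + q • (t • e₁ + e₂) := by
    ext <;> simp [hpq]
  rw [slopeSupport, hcomb]
  exact (supportFun_add_le K _ _).trans_eq
    (congrArg₂ (· + ·) (supportFun_smul K hp _) (supportFun_smul K hq _))

lemma slopeSupport_sub_le {s t : ℝ} (hst : s ≤ t) :
    slopeSupport K t - slopeSupport K s ≤ (t - s) * rightEnd K := by
  rw [sub_le_iff_le_add', rightEnd, ← supportFun_smul K (sub_nonneg.2 hst), slopeSupport,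
    slopeSupport]
  refine (supportFun_add_le K _ _).trans_eq' ?_
  congr 1
  module

lemma le_slopeSupport_sub {s t : ℝ} (hst : s ≤ t) :
    (t - s) * leftEnd K ≤ slopeSupport K t - slopeSupport K s := by
  rw [leftEnd, mul_neg, neg_le_sub_iff_le_add, ← supportFun_smul K (sub_nonneg.2 hst),
    slopeSupport, slopeSupport]
  refine (supportFun_add_le K _ _).trans_eq' ?_
  congr 1
  module

lemma tangentAbscissa_mem_Icc (s : ℝ) : tangentAbscissa K s ∈ Icc (leftEnd K) (rightEnd K) :=
  ⟨le_rightDeriv_of_le_slope (convexOn_slopeSupport K) fun _ h ↦ le_slopeSupport_sub K h.le,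
    rightDeriv_le_of_slope_le (convexOn_slopeSupport K) (lt_add_one s)
      (slopeSupport_sub_le K (lt_add_one s).le)⟩

lemma monotone_tangentAbscissa : Monotone (tangentAbscissa K) :=
  monotone_rightDeriv (convexOn_slopeSupport K)

lemma slopeSupport_add : slopeSupport (K + L) = slopeSupport K + slopeSupport L :=
  funext fun _ ↦ supportFun_add K L _

lemma tangentAbscissa_add (s : ℝ) :
    tangentAbscissa (K + L) s = tangentAbscissa K s + tangentAbscissa L s := by
  rw [tangentAbscissa, slopeSupport_add]
  exact ((hasDerivWithinAt_rightDeriv (convexOn_slopeSupport K) s).add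
    (hasDerivWithinAt_rightDeriv (convexOn_slopeSupport L) s)).derivWithin
    (uniqueDiffWithinAt_Ioi s)

lemma leftEnd_add : leftEnd (K + L) = leftEnd K + leftEnd L := by
  rw [leftEnd, supportFun_add, neg_add, leftEnd, leftEnd]

lemma rightEnd_add : rightEnd (K + L) = rightEnd K + rightEnd L :=
  supportFun_add K L e₁

lemma exists_argmin_slopeSupport_sub {x : ℝ} (hx : x ∈ Ioo (leftEnd K) (rightEnd K)) :
    ∃ t, ∀ s, slopeSupport K t - t * x ≤ slopeSupport K s - s * x := by
  have hcont : Continuous fun s ↦ slopeSupport K s - s * x :=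
    (convexOn_slopeSupport K).locallyLipschitz.continuous.sub (continuous_id.mul continuous_const)
  refine hcont.exists_forall_le ?_
  rw [cocompact_eq_atBot_atTop, Filter.tendsto_sup]
  obtain ⟨z, hz, hzK⟩ := exists_eq_supportFun K (-e₁)
  obtain ⟨y, hy, hyK⟩ := exists_eq_supportFun K e₁
  have hzx : z.1 - x < 0 := by simpa [leftEnd, ← hzK] using hx.1
  have hyx : 0 < y.1 - x := by simpa [rightEnd, ← hyK] using hx.2
  constructor
  · refine Filter.tendsto_atTop_mono (f := fun s ↦ s * (z.1 - x) + z.2)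
      (fun s ↦ by linarith [le_slopeSupport K hz s]) ?_
    exact Filter.tendsto_atTop_add_const_right _ _ (Filter.tendsto_id.atBot_mul_const_of_neg hzx)
  · refine Filter.tendsto_atTop_mono (f := fun s ↦ s * (y.1 - x) + y.2)
      (fun s ↦ by linarith [le_slopeSupport K hy s]) ?_
    exact Filter.tendsto_atTop_add_const_right _ _ (Filter.tendsto_id.atTop_mul_const hyx)

/-- The ordinate of the highest point of `K` with abscissa `x`, for `x` between `leftEnd K` and
`rightEnd K`. -/
noncomputable def topHeight (K : ConvexBody (ℝ × ℝ)) (x : ℝ) : ℝ :=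
  ⨅ s, slopeSupport K s - s * x

lemma leftEnd_neg : leftEnd ((-1 : ℝ) • K) = -rightEnd K := by
  simp [leftEnd, rightEnd, supportFun_smul_body]

lemma rightEnd_neg : rightEnd ((-1 : ℝ) • K) = -leftEnd K := by
  rw [leftEnd, rightEnd, supportFun_smul_body, neg_neg, ← neg_one_smul ℝ e₁]

lemma neg_mem_neg_iff {z : ℝ × ℝ} : -z ∈ (-1 : ℝ) • K ↔ z ∈ K := by
  simp [← SetLike.mem_coe]

variable {K}

lemma exists_mem_of_mem_Icc {x : ℝ} (hx : x ∈ Icc (leftEnd K) (rightEnd K)) :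
    ∃ y, (x, y) ∈ K := by
  rw [leftEnd, rightEnd, ← image_eq_Icc_supportFun] at hx
  obtain ⟨⟨_, y⟩, hz, rfl⟩ := hx
  exact ⟨y, hz⟩

lemma bddBelow_slopeSupport_sub {x : ℝ} (hx : x ∈ Icc (leftEnd K) (rightEnd K)) :
    BddBelow (range fun s ↦ slopeSupport K s - s * x) := by
  obtain ⟨y, hy⟩ := exists_mem_of_mem_Icc hx
  exact ⟨y, forall_mem_range.2 fun s ↦ le_sub_iff_add_le'.2 (le_slopeSupport K hy s)⟩

lemma le_topHeight_iff {x y : ℝ} (hx : x ∈ Icc (leftEnd K) (rightEnd K)) :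
    y ≤ topHeight K x ↔ ∀ s, s * x + y ≤ slopeSupport K s := by
  rw [topHeight, le_ciInf_iff (bddBelow_slopeSupport_sub hx)]
  exact forall_congr' fun s ↦ le_sub_iff_add_le'

lemma topHeight_le {x : ℝ} (hx : x ∈ Icc (leftEnd K) (rightEnd K)) (s : ℝ) :
    topHeight K x ≤ slopeSupport K s - s * x :=
  ciInf_le (bddBelow_slopeSupport_sub hx) s

lemma mem_iff_forall_le_slopeSupport {x y : ℝ} :
    (x, y) ∈ K ↔ x ∈ Icc (leftEnd K) (rightEnd K) ∧ (∀ s, s * x + y ≤ slopeSupport K s) ∧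
      ∀ s, s * -x + -y ≤ slopeSupport ((-1 : ℝ) • K) s := by
  refine ⟨fun h ↦ ⟨?_, le_slopeSupport K h,
    le_slopeSupport ((-1 : ℝ) • K) ((neg_mem_neg_iff K).2 h)⟩, fun ⟨hx, hup, hlow⟩ ↦ ?_⟩
  · rw [leftEnd, rightEnd, ← image_eq_Icc_supportFun]
    exact mem_image_of_mem e₁ h
  refine mem_iff_forall_le_supportFun.2 fun f ↦ ?_
  obtain ⟨p, q, rfl⟩ : ∃ p q : ℝ, f = p • e₁ + q • e₂ :=
    ⟨f (1, 0), f (0, 1), by ext <;> simp⟩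
  rcases lt_trichotomy q 0 with hq | rfl | hq
  · have hline : p • e₁ + q • e₂ = -q • (-1 : ℝ) • ((p / q) • e₁ + e₂) := by
      rw [smul_smul, neg_mul_neg, mul_one, smul_add, smul_smul, mul_div_cancel₀ p hq.ne]
    rw [hline, supportFun_smul K (neg_nonneg.2 hq.le), ← supportFun_smul_body]
    refine (mul_le_mul_of_nonneg_left (hlow (p / q)) (neg_nonneg.2 hq.le)).trans_eq' ?_
    simp only [mul_neg, neg_mul, smul_add, neg_smul, one_smul, smul_neg, neg_neg, add_apply,
      smul_apply, ContinuousLinearMap.coe_fst', smul_eq_mul, ContinuousLinearMap.coe_snd']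
    ring
  · obtain ⟨w, hw⟩ := exists_mem_of_mem_Icc hx
    simpa using le_supportFun K (p • e₁ + (0 : ℝ) • e₂) hw
  · have hline : p • e₁ + q • e₂ = q • ((p / q) • e₁ + e₂) := by
      rw [smul_add, smul_smul, mul_div_cancel₀ p hq.ne']
    rw [hline, supportFun_smul K hq.le]
    exact mul_le_mul_of_nonneg_left (hup (p / q)) hq.le

lemma neg_mem_Icc_ends {x : ℝ} (hx : x ∈ Icc (leftEnd K) (rightEnd K)) :
    -x ∈ Icc (leftEnd ((-1 : ℝ) • K)) (rightEnd ((-1 : ℝ) • K)) := by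
  rw [leftEnd_neg, rightEnd_neg]
  exact ⟨neg_le_neg hx.2, neg_le_neg hx.1⟩

lemma fiber_eq_Icc_topHeight {x : ℝ} (hx : x ∈ Icc (leftEnd K) (rightEnd K)) :
    Prod.mk x ⁻¹' (K : Set (ℝ × ℝ)) =
      Icc (-topHeight ((-1 : ℝ) • K) (-x)) (topHeight K x) := by
  ext y
  rw [mem_preimage, SetLike.mem_coe, mem_iff_forall_le_slopeSupport, and_iff_right hx, mem_Icc,
    neg_le, le_topHeight_iff hx, le_topHeight_iff (neg_mem_Icc_ends hx), and_comm]

lemma fiber_eq_empty {x : ℝ} (hx : x ∉ Icc (leftEnd K) (rightEnd K)) :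
    Prod.mk x ⁻¹' (K : Set (ℝ × ℝ)) = ∅ :=
  eq_empty_of_forall_notMem fun _ h ↦ hx (mem_iff_forall_le_slopeSupport.1 h).1

lemma topHeight_add_topHeight_neg_nonneg {x : ℝ} (hx : x ∈ Icc (leftEnd K) (rightEnd K)) :
    0 ≤ topHeight K x + topHeight ((-1 : ℝ) • K) (-x) := by
  obtain ⟨y, hy⟩ := exists_mem_of_mem_Icc hx
  have hfiber : y ∈ Prod.mk x ⁻¹' (K : Set (ℝ × ℝ)) := hy
  rw [fiber_eq_Icc_topHeight hx] at hfiber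
  linarith [hfiber.1, hfiber.2]

end SlopeSupport

section BoundingBox

variable (K L : ConvexBody (ℝ × ℝ))

/-- The width of the bounding box of `K`. -/
noncomputable def boxWidth (K : ConvexBody (ℝ × ℝ)) : ℝ :=
  rightEnd K - leftEnd K

/-- The height of the bounding box of `K`. -/
noncomputable def boxHeight (K : ConvexBody (ℝ × ℝ)) : ℝ :=
  slopeSupport K 0 + slopeSupport ((-1 : ℝ) • K) 0

lemma boxWidth_nonneg : 0 ≤ boxWidth K :=
  sub_nonneg.2 ((tangentAbscissa_mem_Icc K 0).1.trans (tangentAbscissa_mem_Icc K 0).2)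

lemma boxHeight_nonneg : 0 ≤ boxHeight K := by
  obtain ⟨z, hz⟩ := K.nonempty
  have hup := le_slopeSupport K hz 0
  have hlow := le_slopeSupport _ ((neg_mem_neg_iff K).2 hz) 0
  simp only [zero_mul, zero_add, Prod.snd_neg] at hup hlow
  rw [boxHeight]
  linarith

lemma boxWidth_add : boxWidth (K + L) = boxWidth K + boxWidth L := by
  rw [boxWidth, leftEnd_add, rightEnd_add, add_sub_add_comm, boxWidth, boxWidth]

lemma boxHeight_add : boxHeight (K + L) = boxHeight K + boxHeight L := by
  simp only [boxHeight, smul_add, slopeSupport_add, Pi.add_apply, add_add_add_comm]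

end BoundingBox

section Corners

variable (K L : ConvexBody (ℝ × ℝ))

/-- The signed horizontal distance from a vertical side of the bounding box of `K` to the point of
contact of the upper supporting line of slope `-s`; the side is the left one when this line is
increasing and the right one otherwise. -/
noncomputable def cornerGap (K : ConvexBody (ℝ × ℝ)) (s : ℝ) : ℝ :=
  tangentAbscissa K s - if s < 0 then leftEnd K else rightEnd K

/-- The speed at which the upper supporting line of slope `-s`, turning away from the horizontal one
`s = 0`, descends above the abscissa `x`. Only its positive part matters: it vanishes once the line
has passed the contact point with abscissa `x`. -/
noncomputable def descentRate (K : ConvexBody (ℝ × ℝ)) (x s : ℝ) : ℝ :=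
  if s < 0 then tangentAbscissa K s - x else -(tangentAbscissa K s - x)

lemma measurable_cornerGap : Measurable (cornerGap K) :=
  (monotone_tangentAbscissa K).measurable.sub
    (measurable_const.ite measurableSet_Iio measurable_const)

lemma measurable_descentRate : Measurable (Function.uncurry (descentRate K)) := by
  have hsub : Measurable fun z : ℝ × ℝ ↦ tangentAbscissa K z.2 - z.1 :=
    ((monotone_tangentAbscissa K).measurable.comp measurable_snd).sub measurable_fst
  exact hsub.ite (measurableSet_Iio.preimage measurable_snd) hsub.neg

lemma rightDeriv_slopeSupport_sub (x s : ℝ) :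
    derivWithin (fun t ↦ slopeSupport K t - t * x) (Ioi s) s = tangentAbscissa K s - x := by
  have hlinear : HasDerivWithinAt (fun t ↦ t * x) x (Ioi s) s := by
    simpa using (hasDerivWithinAt_id s (Ioi s)).mul_const x
  exact ((hasDerivWithinAt_rightDeriv (convexOn_slopeSupport K) s).sub hlinear).derivWithin
    (uniqueDiffWithinAt_Ioi s)

lemma convexOn_slopeSupport_sub (x : ℝ) : ConvexOn ℝ univ fun s ↦ slopeSupport K s - s * x :=
  (convexOn_slopeSupport K).sub ((LinearMap.mulRight ℝ x).concaveOn convex_univ)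

variable {K} in
lemma lintegral_descentRate {x : ℝ} (hx : x ∈ Ioo (leftEnd K) (rightEnd K)) :
    ∫⁻ s, ENNReal.ofReal (descentRate K x s) =
      ENNReal.ofReal (slopeSupport K 0 - topHeight K x) := by
  obtain ⟨t, ht⟩ := exists_argmin_slopeSupport_sub K hx
  have htop : topHeight K x = slopeSupport K t - t * x :=
    le_antisymm (topHeight_le (Ioo_subset_Icc_self hx) t) (le_ciInf ht)
  have hdescent := lintegral_rightDeriv_toward_argmin (convexOn_slopeSupport_sub K x) ht 0
  simpa only [rightDeriv_slopeSupport_sub, descentRate, htop, zero_mul, sub_zero] using hdescent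

lemma lintegral_Ioo_descentRate (s : ℝ) :
    ∫⁻ x in Ioo (leftEnd K) (rightEnd K), ENNReal.ofReal (descentRate K x s) =
      ENNReal.ofReal (cornerGap K s ^ 2 / 2) := by
  by_cases hs : s < 0
  · simpa only [descentRate, cornerGap, if_pos hs] using
      lintegral_Ioo_ofReal_const_sub (tangentAbscissa_mem_Icc K s)
  · simpa only [descentRate, cornerGap, if_neg hs, neg_sub, sub_sq_comm] using
      lintegral_Ioo_ofReal_sub_const (tangentAbscissa_mem_Icc K s)

lemma lintegral_cornerGap_sq :
    ∫⁻ s, ENNReal.ofReal (cornerGap K s ^ 2 / 2) =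
      ∫⁻ x in Ioo (leftEnd K) (rightEnd K), ENNReal.ofReal (slopeSupport K 0 - topHeight K x) :=
  calc ∫⁻ s, ENNReal.ofReal (cornerGap K s ^ 2 / 2)
      = ∫⁻ s, ∫⁻ x in Ioo (leftEnd K) (rightEnd K), ENNReal.ofReal (descentRate K x s) :=
        lintegral_congr fun s ↦ (lintegral_Ioo_descentRate K s).symm
    _ = ∫⁻ x in Ioo (leftEnd K) (rightEnd K), ∫⁻ s, ENNReal.ofReal (descentRate K x s) :=
        (lintegral_lintegral_swap (measurable_descentRate K).ennreal_ofReal.aemeasurable).symm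
    _ = _ := setLIntegral_congr_fun measurableSet_Ioo fun _ hx ↦ lintegral_descentRate hx

lemma aemeasurable_slopeSupport_sub_topHeight :
    AEMeasurable (fun x ↦ ENNReal.ofReal (slopeSupport K 0 - topHeight K x))
      (volume.restrict (Ioo (leftEnd K) (rightEnd K))) :=
  ⟨_, (measurable_descentRate K).ennreal_ofReal.lintegral_prod_right,
    (ae_restrict_iff' measurableSet_Ioo).2 (.of_forall fun _ hx ↦ (lintegral_descentRate hx).symm)⟩

lemma lintegral_cornerGap_neg_sq :
    ∫⁻ s, ENNReal.ofReal (cornerGap ((-1 : ℝ) • K) s ^ 2 / 2) =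
      ∫⁻ x in Ioo (leftEnd K) (rightEnd K),
        ENNReal.ofReal (slopeSupport ((-1 : ℝ) • K) 0 - topHeight ((-1 : ℝ) • K) (-x)) := by
  rw [lintegral_cornerGap_sq, leftEnd_neg, rightEnd_neg, ← image_neg_Ioo]
  exact ((Measure.measurePreserving_neg volume).setLIntegral_comp_emb
    (MeasurableEquiv.neg ℝ).measurableEmbedding _ _).symm

lemma volume_eq_lintegral_fiber :
    volume (K : Set (ℝ × ℝ)) =
      ∫⁻ x in Ioo (leftEnd K) (rightEnd K), volume (Prod.mk x ⁻¹' (K : Set (ℝ × ℝ))) := by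
  rw [Measure.volume_eq_prod, Measure.prod_apply K.isClosed.measurableSet,
    setLIntegral_congr Ioo_ae_eq_Icc, setLIntegral_eq_of_support_subset]
  exact Function.support_subset_iff'.2 fun x hx ↦
    (congrArg volume (fiber_eq_empty hx)).trans measure_empty

variable {K} in
lemma volume_fiber_add_corner_slices {x : ℝ} (hx : x ∈ Ioo (leftEnd K) (rightEnd K)) :
    volume (Prod.mk x ⁻¹' (K : Set (ℝ × ℝ))) +
      (ENNReal.ofReal (slopeSupport K 0 - topHeight K x) +
        ENNReal.ofReal (slopeSupport ((-1 : ℝ) • K) 0 - topHeight ((-1 : ℝ) • K) (-x))) =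
      ENNReal.ofReal (boxHeight K) := by
  have hx := Ioo_subset_Icc_self hx
  have htop := topHeight_le hx 0
  have htopneg := topHeight_le (neg_mem_Icc_ends hx) 0
  have hfiber := topHeight_add_topHeight_neg_nonneg hx
  rw [fiber_eq_Icc_topHeight hx, Real.volume_Icc, ← ENNReal.ofReal_add, ← ENNReal.ofReal_add,
    boxHeight]
  · ring_nf
  all_goals linarith

lemma volume_add_lintegral_cornerGap_sq :
    volume (K : Set (ℝ × ℝ)) + ((∫⁻ s, ENNReal.ofReal (cornerGap K s ^ 2 / 2)) +
      ∫⁻ s, ENNReal.ofReal (cornerGap ((-1 : ℝ) • K) s ^ 2 / 2)) =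
      ENNReal.ofReal (boxWidth K * boxHeight K) := by
  rw [volume_eq_lintegral_fiber, lintegral_cornerGap_sq, lintegral_cornerGap_neg_sq,
    ← lintegral_add_left' (aemeasurable_slopeSupport_sub_topHeight K),
    ← lintegral_add_left (measurable_measure_prodMk_left K.isClosed.measurableSet),
    setLIntegral_congr_fun measurableSet_Ioo fun x hx ↦ volume_fiber_add_corner_slices hx,
    setLIntegral_const, Real.volume_Ioo, mul_comm, ← ENNReal.ofReal_mul, boxWidth]
  exact boxWidth_nonneg K

lemma integrable_cornerGap_sq : Integrable fun s ↦ cornerGap K s ^ 2 / 2 := by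
  refine (lintegral_ofReal_ne_top_iff_integrable
    (((measurable_cornerGap K).pow_const 2).div_const 2).aestronglyMeasurable
    (.of_forall fun s ↦ by positivity)).1 ?_
  exact ne_top_of_le_ne_top ENNReal.ofReal_ne_top
    (le_self_add.trans (le_add_self.trans (volume_add_lintegral_cornerGap_sq K).le))

lemma memLp_cornerGap : MemLp (cornerGap K) 2 := by
  refine (memLp_two_iff_integrable_sq (measurable_cornerGap K).aestronglyMeasurable).2 ?_
  simpa [div_mul_cancel₀] using (integrable_cornerGap_sq K).mul_const 2

lemma volume_toReal_eq_boxWidth_mul_boxHeight_sub :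
    (volume (K : Set (ℝ × ℝ))).toReal = boxWidth K * boxHeight K -
      ((∫ s, cornerGap K s ^ 2) + ∫ s, cornerGap ((-1 : ℝ) • K) s ^ 2) / 2 := by
  have hintegral (L : ConvexBody (ℝ × ℝ)) :=
    ofReal_integral_eq_lintegral_ofReal (integrable_cornerGap_sq L)
      (.of_forall fun s ↦ by positivity)
  have hpos (L : ConvexBody (ℝ × ℝ)) : 0 ≤ ∫ s, cornerGap L s ^ 2 / 2 :=
    integral_nonneg fun s ↦ by positivity
  have harea := congrArg ENNReal.toReal (volume_add_lintegral_cornerGap_sq K)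
  rw [← hintegral, ← hintegral, ENNReal.toReal_add K.isCompact.measure_ne_top (by finiteness),
    ENNReal.toReal_add ENNReal.ofReal_ne_top ENNReal.ofReal_ne_top,
    ENNReal.toReal_ofReal (hpos _), ENNReal.toReal_ofReal (hpos _),
    ENNReal.toReal_ofReal (mul_nonneg (boxWidth_nonneg K) (boxHeight_nonneg K)),
    integral_div, integral_div] at harea
  linarith

lemma cornerGap_add : cornerGap (K + L) = cornerGap K + cornerGap L := by
  funext s
  simp only [cornerGap, tangentAbscissa_add, leftEnd_add, rightEnd_add, Pi.add_apply]
  split_ifs <;> ring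

/-- `cornerGap K` as an element of `L²(ℝ)`. -/
noncomputable def cornerGapLp (K : ConvexBody (ℝ × ℝ)) : Lp ℝ 2 (volume : Measure ℝ) :=
  (memLp_cornerGap K).toLp

lemma cornerGapLp_add : cornerGapLp (K + L) = cornerGapLp K + cornerGapLp L :=
  (MemLp.toLp_congr _ ((memLp_cornerGap K).add (memLp_cornerGap L))
    (.of_forall (congrFun (cornerGap_add K L)))).trans (MemLp.toLp_add _ _)

lemma inner_cornerGapLp_self :
    inner ℝ (cornerGapLp K) (cornerGapLp K) = ∫ s, cornerGap K s ^ 2 := by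
  rw [L2.inner_def]
  refine integral_congr_ae ?_
  filter_upwards [(memLp_cornerGap K).coeFn_toLp] with s hs
  rw [cornerGapLp, hs, real_inner_self_eq_norm_sq, Real.norm_eq_abs, sq_abs]

end Corners

section BoxForm

variable {E : Type*} [AddCommGroup E] [Module ℝ E]

lemma mul_apply_self_le_sq_of_nonpos_on_ker {B : LinearMap.BilinForm ℝ E} (hB : B.IsSymm)
    (ℓ : Module.Dual ℝ E) (hℓ : ∀ x, ℓ x = 0 → B x x ≤ 0) {w : E} (hw : 0 ≤ B w w) (x : E) :
    B w w * B x x ≤ B x w ^ 2 := by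
  rcases hw.eq_or_lt with hzero | hpos
  · rw [← hzero, zero_mul]
    positivity
  have hℓw : ℓ w ≠ 0 := fun h ↦ (hℓ w h).not_gt hpos
  have hproj := hℓ (x - (ℓ x / ℓ w) • w) (by simp [hℓw])
  simp only [map_sub, map_smul, LinearMap.sub_apply, LinearMap.smul_apply, smul_eq_mul,
    ← hB.eq x w] at hproj
  nlinarith [sq_nonneg (B x w - ℓ x / ℓ w * B w w)]

variable (V : Type*) [NormedAddCommGroup V] [InnerProductSpace ℝ V]

/-- The polarization of the quadratic form `(p, q, v) ↦ p q - ‖v‖² / 2`: the area of a box of sides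
`p` and `q` with corners of total area `‖v‖² / 2` removed. -/
noncomputable def boxForm : LinearMap.BilinForm ℝ (ℝ × ℝ × V) :=
  LinearMap.mk₂ ℝ (fun x y ↦ (x.1 * y.2.1 + x.2.1 * y.1 - inner ℝ x.2.2 y.2.2) / 2)
    (fun x x' y ↦ by simp only [Prod.fst_add, Prod.snd_add, inner_add_left]; ring)
    (fun r x y ↦ by simp only [Prod.smul_fst, Prod.smul_snd, smul_eq_mul,
      real_inner_smul_left]; ring)
    (fun x y y' ↦ by simp only [Prod.fst_add, Prod.snd_add, inner_add_right]; ring)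
    (fun r x y ↦ by simp only [Prod.smul_fst, Prod.smul_snd, smul_eq_mul,
      real_inner_smul_right]; ring)

variable {V}

lemma boxForm_apply (x y : ℝ × ℝ × V) :
    boxForm V x y = (x.1 * y.2.1 + x.2.1 * y.1 - inner ℝ x.2.2 y.2.2) / 2 := rfl

lemma isSymm_boxForm : (boxForm V).IsSymm :=
  ⟨fun x y ↦ by simp only [boxForm_apply, real_inner_comm]; ring⟩

lemma boxForm_mul_self_le_sq {w : ℝ × ℝ × V} (hw : 0 ≤ boxForm V w w) (x : ℝ × ℝ × V) :
    boxForm V w w * boxForm V x x ≤ boxForm V x w ^ 2 := by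
  refine mul_apply_self_le_sq_of_nonpos_on_ker isSymm_boxForm (LinearMap.fst ℝ ℝ (ℝ × V))
    (fun y (hy : y.1 = 0) ↦ ?_) hw x
  simpa [boxForm_apply, hy, neg_div] using div_nonneg (sq_nonneg ‖y.2.2‖) zero_le_two

end BoxForm

section AreaVector

/-- The Minkowski-additive invariant of `K` on which area is a quadratic form: the sides of the
bounding box, and the functions measuring its upper and lower corners outside `K`. -/
noncomputable def areaVector (K : ConvexBody (ℝ × ℝ)) :
    ℝ × ℝ × WithLp 2 (Lp ℝ 2 (volume : Measure ℝ) × Lp ℝ 2 (volume : Measure ℝ)) :=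
  (boxWidth K, boxHeight K, WithLp.toLp 2 (cornerGapLp K, cornerGapLp ((-1 : ℝ) • K)))

lemma areaVector_add (K L : ConvexBody (ℝ × ℝ)) :
    areaVector (K + L) = areaVector K + areaVector L := by
  simp only [areaVector, boxWidth_add, boxHeight_add, smul_add, cornerGapLp_add]
  rfl

lemma volume_toReal_eq_boxForm (K : ConvexBody (ℝ × ℝ)) :
    (volume (K : Set (ℝ × ℝ))).toReal = boxForm _ (areaVector K) (areaVector K) := by
  rw [volume_toReal_eq_boxWidth_mul_boxHeight_sub, boxForm_apply, areaVector,
    WithLp.prod_inner_apply, inner_cornerGapLp_self, inner_cornerGapLp_self]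
  ring

lemma mixedArea_eq_boxForm (K L : ConvexBody (ℝ × ℝ)) :
    mixedArea K L = boxForm _ (areaVector K) (areaVector L) := by
  rw [mixedArea, ← ConvexBody.coe_add, volume_toReal_eq_boxForm, volume_toReal_eq_boxForm,
    volume_toReal_eq_boxForm, areaVector_add, map_add, map_add, LinearMap.add_apply,
    LinearMap.add_apply, isSymm_boxForm.eq (areaVector L) (areaVector K)]
  ring

end AreaVector

theorem extended_minkowski_inequality_general {ι : Type*} [Fintype ι] (K₀ : ConvexBody (ℝ × ℝ))
    (K : ι → ConvexBody (ℝ × ℝ)) (c : ι → ℝ) :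
    (volume (K₀ : Set (ℝ × ℝ))).toReal * ∑ i, ∑ j, c i * c j * mixedArea (K i) (K j) ≤
      (∑ k, c k * mixedArea (K k) K₀) ^ 2 := by
  have hw : 0 ≤ boxForm _ (areaVector K₀) (areaVector K₀) :=
    volume_toReal_eq_boxForm K₀ ▸ ENNReal.toReal_nonneg
  have hexpand : boxForm _ (∑ k, c k • areaVector (K k)) (∑ k, c k • areaVector (K k)) =
      ∑ i, ∑ j, c i * c j * mixedArea (K i) (K j) := by
    rw [LinearMap.map_sum₂]
    simp only [map_sum, map_smul, LinearMap.smul_apply, smul_eq_mul, mul_left_comm,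
      mul_assoc, mixedArea_eq_boxForm]
  have hreverse := boxForm_mul_self_le_sq hw (∑ k, c k • areaVector (K k))
  rw [hexpand, ← volume_toReal_eq_boxForm, LinearMap.map_sum₂] at hreverse
  simpa only [map_smul, LinearMap.smul_apply, smul_eq_mul, mixedArea_eq_boxForm] using hreverse

/-- Extended Minkowski inequality with arbitrary real coefficients: for symmetric plane
convex bodies `K₀, K₁, …, Kₙ` of positive area and any `c₁, …, cₙ ∈ ℝ`,
`a(K₀) Σᵢⱼ cᵢcⱼ a(Kᵢ,Kⱼ) ≤ (Σₖ cₖ a(Kₖ,K₀))²`. -/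
theorem extended_minkowski_inequality
    (n : ℕ) (K₀ : Set (ℝ × ℝ)) (K : Fin n → Set (ℝ × ℝ))
    (hK₀ : K₀.Nonempty ∧ IsCompact K₀ ∧ Convex ℝ K₀ ∧ -K₀ = K₀ ∧ 0 < (volume K₀).toReal)
    (hK : ∀ i, (K i).Nonempty ∧ IsCompact (K i) ∧ Convex ℝ (K i) ∧ -(K i) = K i ∧
      0 < (volume (K i)).toReal)
    (c : Fin n → ℝ) :
    (volume K₀).toReal * ∑ i, ∑ j, c i * c j * mixedArea (K i) (K j) ≤
      (∑ k, c k * mixedArea (K k) K₀) ^ 2 := by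
  exact extended_minkowski_inequality_general ⟨K₀, hK₀.2.2.1, hK₀.2.1, hK₀.1⟩
    (fun i ↦ ⟨K i, (hK i).2.2.1, (hK i).2.1, (hK i).1⟩) c
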